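/- Let T>0, E a separable Banach space, V a Banach space densely and continuously embedded in E, and {A(t)}_{t∈[0,T]} a family of linear operators on E satisfying (Hyp'1) with constant ω>0 and (Hyp2)–(Hyp4). For μ∈[0,1] set A^{(μ)}(t) := −μI + (1−μ)A(t) and let {R^{(μ,λ)}(t,s)}_{0≤s≤t≤T} be the evolution system corresponding to {λA^{(μ)}(t)}_{t∈[0,T]} for λ>0. Let cl(A^{(μ0)}_0) denote the closure of the operator (1/T)∫_0^T A^{(μ0)}(τ)dτ (defined on V) and S_{cl(A^{(μ0)}_0)} the C0 semigroup it generates. If (k_n) is a sequence of positive integers and (λ_n)⊂(0,∞), (μ_n)⊂[0,1] satisfy k_n→∞, k_nλ_n→ε for some ε>0, and μ_n→μ0, then for every x∈E, R^{(μ_n,λ_n)}(T,0)^{k_n} x → S_{cl(A^{(μ0)}_0)}(εT) x as n→∞. -/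

import Mathlib

open Filter Topology Set MeasureTheory

noncomputable section

variable {E : Type*} [NormedAddCommGroup E] [NormedSpace ℝ E]

/-- A C₀ semigroup of bounded linear operators on `E`. -/
structure IsC0Semigroup (S : ℝ → E →L[ℝ] E) : Prop where
  map_zero : S 0 = 1
  map_add : ∀ ⦃t s : ℝ⦄, 0 ≤ t → 0 ≤ s → S (t + s) = (S t).comp (S s)
  strong_cont : ∀ x : E, ContinuousOn (fun t => S t x) (Ici (0 : ℝ))

/-- `y` is the limit of `t⁻¹ • (S t x - x)` as `t → 0⁺`. -/
def GenLimitAt (S : ℝ → E →L[ℝ] E) (x y : E) : Prop :=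
  Tendsto (fun t : ℝ => t⁻¹ • (S t x - x)) (𝓝[>] (0 : ℝ)) (𝓝 y)

/-- The (unbounded) operator with domain `D` and action `A` is the generator of `S`. -/
def IsGeneratorOf (D : Set E) (A : E → E) (S : ℝ → E →L[ℝ] E) : Prop :=
  (∀ x, x ∈ D ↔ ∃ y, GenLimitAt S x y) ∧ ∀ x ∈ D, GenLimitAt S x (A x)

/-- Graph of an operator with domain `D` and action `A`. -/
def opGraph (D : Set E) (A : E → E) : Set (E × E) := {p | p.1 ∈ D ∧ p.2 = A p.1}

/-- The operator `(D, A)` is closable: the closure of its graph is a graph of a function. -/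
def IsClosableOp (D : Set E) (A : E → E) : Prop :=
  ∀ x y₁ y₂, (x, y₁) ∈ closure (opGraph D A) → (x, y₂) ∈ closure (opGraph D A) → y₁ = y₂

/-- `(D', A')` is the closure of the operator `(D, A)`. -/
def IsClosureOf (D' : Set E) (A' : E → E) (D : Set E) (A : E → E) : Prop :=
  (∀ x, x ∈ D' ↔ ∃ y, (x, y) ∈ closure (opGraph D A)) ∧
  ∀ x ∈ D', (x, A' x) ∈ closure (opGraph D A)

/-- `(D, A)` is a linear operator (its domain is a subspace on which it acts linearly). -/
def IsLinearOp (D : Set E) (A : E → E) : Prop :=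
  (0 : E) ∈ D ∧
  (∀ x ∈ D, ∀ y ∈ D, x + y ∈ D ∧ A (x + y) = A x + A y) ∧
  (∀ (c : ℝ), ∀ x ∈ D, c • x ∈ D ∧ A (c • x) = c • A x)

/-- An evolution system `{R(t,s)}_{0 ≤ s ≤ t ≤ T}` on `E`. -/
structure IsEvolutionSystem (T : ℝ) (R : ℝ → ℝ → E →L[ℝ] E) : Prop where
  refl : ∀ t ∈ Icc (0 : ℝ) T, R t t = 1
  comp : ∀ ⦃s r t : ℝ⦄, 0 ≤ s → s ≤ r → r ≤ t → t ≤ T → R t s = (R t r).comp (R r s)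
  strong_cont : ∀ x : E, ContinuousOn (fun p : ℝ × ℝ => R p.1 p.2 x)
    {p : ℝ × ℝ | 0 ≤ p.2 ∧ p.2 ≤ p.1 ∧ p.1 ≤ T}

/-- The parameter domain `{(t,s) : 0 ≤ s ≤ t ≤ T}` of an evolution system. -/
def evolDomain (T : ℝ) : Set (ℝ × ℝ) := {p : ℝ × ℝ | 0 ≤ p.2 ∧ p.2 ≤ p.1 ∧ p.1 ≤ T}

/-- A family `{R^{(λ)}}_{λ∈[0,1]}` of evolution systems is continuous: for every `x ∈ E`
and every sequence `λₙ → λ₀` in `[0,1]`, `R^{(λₙ)}(t,s)x → R^{(λ₀)}(t,s)x` uniformly in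
`0 ≤ s ≤ t ≤ T`. -/
def IsContinuousEvolFamily (T : ℝ) (R : ℝ → ℝ → ℝ → E →L[ℝ] E) : Prop :=
  ∀ (x : E) (l : ℕ → ℝ) (l0 : ℝ), (∀ n, l n ∈ Icc (0 : ℝ) 1) → l0 ∈ Icc (0 : ℝ) 1 →
    Tendsto l atTop (𝓝 l0) →
    TendstoUniformlyOn (fun n p => R (l n) p.1 p.2 x) (fun p => R l0 p.1 p.2 x)
      atTop (evolDomain T)

/-- The map `Σ(x,w,λ)(t) = R^{(λ)}(t,0)x + ∫₀ᵗ R^{(λ)}(t,s) w(s) ds`. -/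
def evolMap (R : ℝ → ℝ → E →L[ℝ] E) (x : E) (w : ℝ → E) (t : ℝ) : E :=
  R t 0 x + ∫ s in (0 : ℝ)..t, R t s (w s)

/-- The Hausdorff measure of noncompactness of a set `Q`. -/
def hausdorffMNC (Q : Set E) : ℝ :=
  sInf {r : ℝ | 0 < r ∧ ∃ c : Finset E, Q ⊆ ⋃ y ∈ c, Metric.ball y r}

variable {V : Type*} [NormedAddCommGroup V] [NormedSpace ℝ V]

/-- The data of a time-dependent family `{A(t)}` of (unbounded) linear operators on `E`:
domains `dom t`, actions `op t`, the C₀ semigroups `sg t = S_{A(t)}`, and the bounded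
operators `bdd t ∈ L(V,E)` obtained by restricting `A(t)` to `V` (via the embedding `ι`). -/
structure HypData (E V : Type*) [NormedAddCommGroup E] [NormedSpace ℝ E]
    [NormedAddCommGroup V] [NormedSpace ℝ V] where
  dom : ℝ → Set E
  op : ℝ → E → E
  sg : ℝ → ℝ → E →L[ℝ] E
  bdd : ℝ → V →L[ℝ] E

/-- Each `A(t)`, `t ∈ [0,T]`, generates the C₀ semigroup `sg t`. -/
def HypGen (T : ℝ) (A : HypData E V) : Prop :=
  ∀ t ∈ Icc (0 : ℝ) T, IsC0Semigroup (A.sg t) ∧ IsGeneratorOf (A.dom t) (A.op t) (A.sg t)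

/-- Stability of a family of semigroups: for `0 ≤ t₁ ≤ ⋯ ≤ tₙ ≤ T`, `sᵢ ≥ 0`,
`‖S(t₁)(s₁)⋯S(tₙ)(sₙ)‖ ≤ M e^{ω(s₁+⋯+sₙ)}`. -/
def StableFamily {F : Type*} [NormedRing F] (T : ℝ) (S : ℝ → ℝ → F) (M ω : ℝ) : Prop :=
  ∀ (n : ℕ) (ts ss : Fin n → ℝ), Monotone ts → (∀ i, ts i ∈ Icc (0 : ℝ) T) →
    (∀ i, 0 ≤ ss i) →
    ‖(List.ofFn fun i => S (ts i) (ss i)).prod‖ ≤ M * Real.exp (ω * ∑ i, ss i)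

/-- Condition (Hyp'1): stability with `M = 1` and exponent `−ω`, `ω > 0`. -/
def Hyp1' (T : ℝ) (A : HypData E V) (ω : ℝ) : Prop :=
  0 < ω ∧ StableFamily T A.sg 1 (-ω)

/-- Condition (Hyp1): stability with constants `M ≥ 1`, `ω ∈ ℝ`. -/
def Hyp1 (T : ℝ) (A : HypData E V) (M ω : ℝ) : Prop :=
  1 ≤ M ∧ StableFamily T A.sg M ω

variable (ι : V →L[ℝ] E)

/-- Condition (Hyp2): `V` is `A(t)`-admissible for each `t` and the family of parts of the
`A(t)` in `V` is stable with constants `M_V`, `ω_V`. -/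
def Hyp2 (T : ℝ) (A : HypData E V) (MV ωV : ℝ) : Prop :=
  ∃ SV : ℝ → ℝ → V →L[ℝ] V,
    (∀ t ∈ Icc (0 : ℝ) T, IsC0Semigroup (SV t)) ∧
    (∀ t ∈ Icc (0 : ℝ) T, ∀ s ≥ (0 : ℝ), ∀ v : V, ι (SV t s v) = A.sg t s (ι v)) ∧
    1 ≤ MV ∧ StableFamily T SV MV ωV

/-- Condition (Hyp3): `V ⊆ D(A(t))`, `A(t)|_V = bdd t ∈ L(V,E)`, and `t ↦ bdd t` is
norm-continuous on `[0,T]`. -/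
def Hyp3 (T : ℝ) (A : HypData E V) : Prop :=
  (∀ t ∈ Icc (0 : ℝ) T, ∀ v : V, ι v ∈ A.dom t ∧ A.op t (ι v) = A.bdd t v) ∧
  ContinuousOn A.bdd (Icc (0 : ℝ) T)

/-- The time average `A₀ = (1/T)∫₀ᵀ A(τ) dτ ∈ L(V,E)`. -/
def timeAvg (T : ℝ) (A : HypData E V) : V →L[ℝ] E :=
  (1 / T) • ∫ τ in (0 : ℝ)..T, A.bdd τ

/-- Condition (Hyp4): there is `μ₀ > −ω` such that `(μ₀ I − A₀)V` is dense in `E`. -/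
def Hyp4 (T : ℝ) (A : HypData E V) (ω : ℝ) : Prop :=
  ∃ μ0 : ℝ, -ω < μ0 ∧ Dense (Set.range fun v : V => μ0 • ι v - timeAvg T A v)

/-- Condition (Hyp5): `A(0) = A(T)` (equal domains and actions). -/
def Hyp5 (T : ℝ) (A : HypData E V) : Prop :=
  A.dom 0 = A.dom T ∧ ∀ x ∈ A.dom 0, A.op 0 x = A.op T x

/-- `R` is the evolution system determined by the family with restrictions `Abdd t ∈ L(V,E)`:
it is an evolution system satisfying the norm bound `‖R(t,s)‖ ≤ M e^{ω(t−s)}`, with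
`(∂⁺/∂t)R(t,s)v|_{t=s} = A(s)v` and `(∂/∂s)R(t,s)v = −R(t,s)A(s)v` for `v ∈ V`. -/
def IsDeterminedEvolSystem (T : ℝ) (Abdd : ℝ → V →L[ℝ] E) (M ω : ℝ)
    (R : ℝ → ℝ → E →L[ℝ] E) : Prop :=
  IsEvolutionSystem T R ∧
  (∀ s t : ℝ, 0 ≤ s → s ≤ t → t ≤ T → ‖R t s‖ ≤ M * Real.exp (ω * (t - s))) ∧
  (∀ v : V, ∀ s ∈ Ico (0 : ℝ) T,
    HasDerivWithinAt (fun t => R t s (ι v)) (Abdd s v) (Ici s) s) ∧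
  (∀ v : V, ∀ s t : ℝ, 0 ≤ s → s ≤ t → t ≤ T →
    HasDerivWithinAt (fun r => R t r (ι v)) (-(R t s (Abdd s v))) (Icc (0 : ℝ) t) s)

/-!
Write `F = R^{(μ,λ)}(T,0)`, `h = λ T` and let `A` be the closure of `A₀^{(μ0)}`. Integrating
`∂ₛ R(T,s) v = -λ R(T,s) A^{(μ)}(s) v` over `[0,T]` gives
`h⁻¹ (F v - v) = T⁻¹ ∫₀ᵀ R(T,s) A^{(μ)}(s) v ds`, and `λ → 0` forces `R(T,s) → 1` strongly, so these
difference quotients converge to `A₀^{(μ0)} v` for `v ∈ V`.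

The claim is then a Chernoff-type theorem for contractions `F` with steps `h → 0`. Put
`A_h = h⁻¹ (F - 1)`; since `F` is a contraction, so is `(1 - A_h)⁻¹`. For `g ∈ D(A²)` the orbit
`S(s) g` may leave the range of `V`, where nothing is known about `F`, so it is replaced by
`u(s) = (1 - A_h)⁻¹ S(s) (1 - A) g`. As `V` is a core of `A`, `u(s) → S(s) g` uniformly on compact
time intervals, and `F u(s) - u(s + h) = o(h)` uniformly. For contractions local errors add up, so
`F^k u(0) - u(k h) = o(k h)`, and `D(A²)` is dense.
-/

section StrongConvergence

variable {α 𝕜 X Y : Type*} [NontriviallyNormedField 𝕜]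
  [NormedAddCommGroup X] [NormedSpace 𝕜 X] [NormedAddCommGroup Y] [NormedSpace 𝕜 Y]

lemma equicontinuous_clm_of_norm_le {G : α → X →L[𝕜] Y} {C : ℝ} (hG : ∀ a, ‖G a‖ ≤ C) :
    Equicontinuous fun a x => G a x :=
  (show (∃ C, ∀ a, ‖G a‖ ≤ C) ↔ _ from (NormedSpace.equicontinuous_TFAE G).out 5 1).1 ⟨C, hG⟩

lemma tendsto_clm_apply_of_norm_le {l : Filter α} {G : α → X →L[𝕜] Y} {C : ℝ}
    (hG : ∀ᶠ a in l, ‖G a‖ ≤ C) {x : α → X} {x₀ : X} {y : Y}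
    (hy : Tendsto (fun a => G a x₀) l (𝓝 y)) (hx : Tendsto x l (𝓝 x₀)) :
    Tendsto (fun a => G a (x a)) l (𝓝 y) := by
  have h_dist : Tendsto (fun a => C * ‖x a - x₀‖) l (𝓝 0) := by
    simpa only [mul_zero] using (tendsto_iff_norm_sub_tendsto_zero.1 hx).const_mul C
  have h_diff : Tendsto (fun a => G a (x a - x₀)) l (𝓝 0) :=
    squeeze_zero_norm' (hG.mono fun a ha => (G a).le_of_opNorm_le ha _) h_dist
  simpa only [map_sub, sub_add_cancel, zero_add] using h_diff.add hy

lemma exists_norm_le_of_forall_continuousOn [CompleteSpace X] [TopologicalSpace α] {K : Set α}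
    (hK : IsCompact K) {G : α → X →L[𝕜] Y} (hG : ∀ x, ContinuousOn (fun a => G a x) K) :
    ∃ C, ∀ a ∈ K, ‖G a‖ ≤ C := by
  have h_pointwise : ∀ x, ∃ C, ∀ a : K, ‖G a x‖ ≤ C := fun x =>
    (hK.exists_bound_of_continuousOn (hG x)).imp fun _ hC a => hC a a.2
  exact (banach_steinhaus h_pointwise).imp fun _ hC a ha => hC ⟨a, ha⟩

lemma continuousOn_clm_apply_of_forall_continuousOn [CompleteSpace X] [TopologicalSpace α]
    {K : Set α} (hK : IsCompact K) {G : α → X →L[𝕜] Y}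
    (hG : ∀ x, ContinuousOn (fun a => G a x) K) {x : α → X} (hx : ContinuousOn x K) :
    ContinuousOn (fun a => G a (x a)) K := by
  obtain ⟨C, hC⟩ := exists_norm_le_of_forall_continuousOn hK hG
  exact fun a ha => tendsto_clm_apply_of_norm_le
    (eventually_mem_nhdsWithin.mono hC) (hG (x a) a ha) (hx a ha)

lemma tendsto_clm_apply_of_dense {l : Filter α} {G : α → X →L[𝕜] Y} {C : ℝ}
    (hG : ∀ a, ‖G a‖ ≤ C) (L : X →L[𝕜] Y) {D : Set X} (hD : Dense D)
    (h : ∀ x ∈ D, Tendsto (fun a => G a x) l (𝓝 (L x))) (x : X) :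
    Tendsto (fun a => G a x) l (𝓝 (L x)) :=
  (equicontinuous_clm_of_norm_le hG x).tendsto_of_mem_closure
    (L.continuous.tendsto x |>.mono_left nhdsWithin_le_nhds) h (hD x)

lemma tendstoUniformlyOn_of_equicontinuous_of_isCompact {Z W : Type*} [TopologicalSpace Z]
    [UniformSpace W] {l : Filter α} {G : α → Z → W} (hG : Equicontinuous G) {g : Z → W} {K : Set Z}
    (hK : IsCompact K) (h : ∀ z ∈ K, Tendsto (fun a => G a z) l (𝓝 (g z))) :
    TendstoUniformlyOn G g l K := by
  have h_pi : Tendsto ((⋃₀ {K}).domRestrict ∘ G) l (𝓝 ((⋃₀ {K}).domRestrict g)) :=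
    tendsto_pi_nhds.2 fun z => h z (by simpa only [sUnion_singleton] using z.2)
  have h_unif := (EquicontinuousOn.tendsto_uniformOnFun_iff_pi' (𝔖 := {K})
    (by simpa only [mem_singleton_iff, forall_eq] using hK)
    (fun K _ => hG.equicontinuousOn K) l g).2 h_pi
  exact UniformOnFun.tendsto_iff_tendstoUniformlyOn.1 h_unif K rfl

lemma norm_pow_le_one_of_norm_le_one {F : X →L[𝕜] X} (hF : ‖F‖ ≤ 1) : ∀ m : ℕ, ‖F ^ m‖ ≤ 1
  | 0 => ContinuousLinearMap.norm_id_le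
  | m + 1 => (norm_pow_le' F m.succ_pos).trans (pow_le_one₀ (norm_nonneg F) hF)

lemma norm_pow_apply_sub_le {F : X →L[𝕜] X} (hF : ‖F‖ ≤ 1) {u : ℕ → X} {c : ℝ} {k : ℕ}
    (h : ∀ j < k, ‖F (u j) - u (j + 1)‖ ≤ c) : ‖(F ^ k) (u 0) - u k‖ ≤ k * c := by
  induction k with
  | zero => simp only [pow_zero, one_apply_eq_self, sub_self, norm_zero, Nat.cast_zero,
      zero_mul, le_refl]
  | succ k ih =>
    calc ‖(F ^ (k + 1)) (u 0) - u (k + 1)‖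
        = ‖F ((F ^ k) (u 0) - u k) + (F (u k) - u (k + 1))‖ := by
          rw [pow_succ', mul_apply_eq_comp, map_sub, sub_add_sub_cancel]
      _ ≤ ‖F ((F ^ k) (u 0) - u k)‖ + ‖F (u k) - u (k + 1)‖ := norm_add_le _ _
      _ ≤ k * c + c := by
          gcongr
          · exact (F.le_of_opNorm_le hF _).trans
              ((one_mul _).trans_le (ih fun j hj => h j (hj.trans k.lt_succ_self)))
          · exact h k k.lt_succ_self
      _ = (k + 1 : ℕ) * c := by push_cast; ring

end StrongConvergence

section Semigroup

namespace GenLimitAt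

variable {S : ℝ → E →L[ℝ] E} {x y x' y' : E}

lemma sub (hx : GenLimitAt S x y) (hx' : GenLimitAt S x' y') :
    GenLimitAt S (x - x') (y - y') := by
  refine (Tendsto.sub hx hx').congr fun t => ?_
  rw [← smul_sub, map_sub]
  congr 1
  abel

lemma const_smul (hx : GenLimitAt S x y) (c : ℝ) : GenLimitAt S (c • x) (c • y) := by
  refine (Tendsto.const_smul hx c).congr fun t => ?_
  rw [map_smul, ← smul_sub, smul_comm]

lemma eventually_norm_sub_sub_smul_le (hx : GenLimitAt S x y) {c : ℝ} (hc : 0 < c) :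
    ∀ᶠ t in 𝓝[>] (0 : ℝ), ‖S t x - x - t • y‖ ≤ t * c := by
  have h_close : ∀ᶠ t in 𝓝[>] (0 : ℝ), ‖t⁻¹ • (S t x - x) - y‖ < c := by
    simpa only [dist_eq_norm] using Metric.tendsto_nhds.1 hx c hc
  filter_upwards [h_close, self_mem_nhdsWithin] with t ht (ht_pos : 0 < t)
  calc ‖S t x - x - t • y‖ = ‖t • (t⁻¹ • (S t x - x) - y)‖ := by
        rw [smul_sub, smul_inv_smul₀ ht_pos.ne']
    _ = t * ‖t⁻¹ • (S t x - x) - y‖ := by rw [norm_smul, Real.norm_of_nonneg ht_pos.le]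
    _ ≤ t * c := by gcongr

end GenLimitAt

namespace IsC0Semigroup

variable {S : ℝ → E →L[ℝ] E}

lemma apply_add (hS : IsC0Semigroup S) {s t : ℝ} (hs : 0 ≤ s) (ht : 0 ≤ t) (x : E) :
    S (s + t) x = S s (S t x) := by
  rw [hS.map_add hs ht, ContinuousLinearMap.comp_apply]

lemma genLimitAt_apply (hS : IsC0Semigroup S) {x y : E} (hx : GenLimitAt S x y) {s : ℝ}
    (hs : 0 ≤ s) : GenLimitAt S (S s x) (S s y) := by
  refine (((S s).continuous.tendsto y).comp hx).congr' ?_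
  filter_upwards [self_mem_nhdsWithin] with t (ht : 0 < t)
  simp only [Function.comp_apply, map_smul, map_sub, ← hS.apply_add hs ht.le,
    ← hS.apply_add ht.le hs, add_comm]

lemma intervalIntegrable (hS : IsC0Semigroup S) (x : E) {a b : ℝ} (ha : 0 ≤ a) (hb : 0 ≤ b) :
    IntervalIntegrable (fun r => S r x) volume a b :=
  ((hS.strong_cont x).mono fun _ hr => (le_min ha hb).trans hr.1).intervalIntegrable

variable [CompleteSpace E]

lemma hasDerivWithinAt_integral (hS : IsC0Semigroup S) (x : E) {a : ℝ} (ha : 0 ≤ a) :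
    HasDerivWithinAt (fun t => ∫ r in a..t, S r x) (S a x) (Ici a) a := by
  have h_cont : ContinuousOn (fun r => S r x) (Ici a) :=
    (hS.strong_cont x).mono (Ici_subset_Ici.2 ha)
  have h_meas : StronglyMeasurableAtFilter (fun r => S r x) (𝓝[>] a) :=
    ⟨Ioi a, self_mem_nhdsWithin,
      (h_cont.mono Ioi_subset_Ici_self).aestronglyMeasurable measurableSet_Ioi⟩
  exact intervalIntegral.integral_hasDerivWithinAt_right (hS.intervalIntegrable x ha ha) h_meas
    ((h_cont a self_mem_Ici).mono Ioi_subset_Ici_self)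

lemma tendsto_average (hS : IsC0Semigroup S) (x : E) {a : ℝ} (ha : 0 ≤ a) :
    Tendsto (fun t : ℝ => t⁻¹ • ∫ r in a..(a + t), S r x) (𝓝[>] 0) (𝓝 (S a x)) := by
  have h_slope := (hasDerivWithinAt_iff_tendsto_slope' self_notMem_Ioi).1
    (hS.hasDerivWithinAt_integral x ha).Ioi_of_Ici
  have h_shift : Tendsto (fun t => a + t) (𝓝[>] 0) (𝓝[>] a) := by
    refine tendsto_nhdsWithin_iff.2 ⟨?_, eventually_mem_nhdsWithin.mono fun t (ht : 0 < t) =>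
      lt_add_of_pos_right a ht⟩
    simpa only [add_zero] using
      ((continuous_const_add a).tendsto (0 : ℝ)).mono_left nhdsWithin_le_nhds
  refine (h_slope.comp h_shift).congr fun t => ?_
  rw [Function.comp_apply, slope_def_module, intervalIntegral.integral_same, sub_zero,
    add_sub_cancel_left]

lemma genLimitAt_integral (hS : IsC0Semigroup S) (x : E) {δ : ℝ} (hδ : 0 ≤ δ) :
    GenLimitAt S (∫ r in (0 : ℝ)..δ, S r x) (S δ x - x) := by
  have h_lim := (hS.tendsto_average x hδ).sub (hS.tendsto_average x le_rfl)
  rw [hS.map_zero, one_apply_eq_self] at h_lim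
  refine h_lim.congr' ?_
  filter_upwards [self_mem_nhdsWithin] with t (ht : 0 < t)
  have h_int {a b : ℝ} (ha : 0 ≤ a) (hb : 0 ≤ b) := hS.intervalIntegrable x ha hb
  have h_shift : S t (∫ r in (0 : ℝ)..δ, S r x) = ∫ r in t..(δ + t), S r x := by
    rw [← (S t).intervalIntegral_comp_comm (h_int le_rfl hδ)]
    calc ∫ r in (0 : ℝ)..δ, S t (S r x) = ∫ r in (0 : ℝ)..δ, S (r + t) x :=
          intervalIntegral.integral_congr fun r hr => by
            rw [uIcc_of_le hδ] at hr
            simp only [add_comm r t, hS.apply_add ht.le hr.1]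
      _ = ∫ r in t..(δ + t), S r x := by
          rw [intervalIntegral.integral_comp_add_right (fun r => S r x), zero_add]
  rw [← smul_sub, h_shift, zero_add,
    intervalIntegral.integral_interval_sub_interval_comm' (h_int ht.le (by positivity))
      (h_int le_rfl hδ) (h_int ht.le le_rfl)]

lemma mem_closure_of_average_mem (hS : IsC0Semigroup S) {D : Set E} {x : E}
    (h : ∀ δ > (0 : ℝ), δ⁻¹ • ∫ r in (0 : ℝ)..δ, S r x ∈ D) : x ∈ closure D := by
  have h_lim : Tendsto (fun δ : ℝ => δ⁻¹ • ∫ r in (0 : ℝ)..δ, S r x) (𝓝[>] 0) (𝓝 x) := by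
    simpa only [zero_add, hS.map_zero, one_apply_eq_self] using hS.tendsto_average x le_rfl
  exact mem_closure_of_tendsto h_lim (eventually_mem_nhdsWithin.mono h)

lemma dense_generator_domain (hS : IsC0Semigroup S) : Dense {x | ∃ y, GenLimitAt S x y} := fun x =>
  hS.mem_closure_of_average_mem fun δ hδ =>
    ⟨_, (hS.genLimitAt_integral x hδ.le).const_smul δ⁻¹⟩

lemma dense_generator_sq_domain (hS : IsC0Semigroup S) :
    Dense {x | ∃ y z, GenLimitAt S x y ∧ GenLimitAt S y z} := by
  refine dense_closure.1 (hS.dense_generator_domain.mono ?_)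
  rintro x ⟨y, hxy⟩
  exact hS.mem_closure_of_average_mem fun δ hδ =>
    ⟨_, _, (hS.genLimitAt_integral x hδ.le).const_smul δ⁻¹,
      ((hS.genLimitAt_apply hxy hδ.le).sub hxy).const_smul δ⁻¹⟩

end IsC0Semigroup

lemma IsClosureOf.mem_closure_opGraph {D D' : Set E} {f A' : E → E} {S : ℝ → E →L[ℝ] E}
    (hclos : IsClosureOf D' A' D f) (hgen : IsGeneratorOf D' A' S) {x y : E}
    (hxy : GenLimitAt S x y) : (x, y) ∈ closure (opGraph D f) := by
  have hx : x ∈ D' := (hgen.1 x).2 ⟨y, hxy⟩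
  have hy : A' x = y := tendsto_nhds_unique (hgen.2 x hx) hxy
  exact hy ▸ hclos.2 x hx

end Semigroup

section Chernoff

variable {α : Type*} {l : Filter α}

/-- The difference quotient `h⁻¹ (F - 1)`, i.e. the generator of the discrete-time semigroup
`F ^ k` observed at times `k h`. -/
def discreteGenerator (h : ℝ) (F : E →L[ℝ] E) : E →L[ℝ] E := h⁻¹ • (F - 1)

lemma discreteGenerator_apply (h : ℝ) (F : E →L[ℝ] E) (x : E) :
    discreteGenerator h F x = h⁻¹ • (F x - x) := rfl

lemma apply_eq_add_smul_discreteGenerator {h : ℝ} (hh : h ≠ 0) (F : E →L[ℝ] E) (x : E) :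
    F x = x + h • discreteGenerator h F x := by
  rw [discreteGenerator_apply, smul_inv_smul₀ hh, add_sub_cancel]

lemma mul_norm_le_norm_smul_sub_discreteGenerator {h r : ℝ} (hh : 0 < h) {F : E →L[ℝ] E}
    (hF : ‖F‖ ≤ 1) (hr : 0 ≤ r) (x : E) : r * ‖x‖ ≤ ‖r • x - discreteGenerator h F x‖ := by
  have h_split : (r + h⁻¹) • x = (r • x - discreteGenerator h F x) + h⁻¹ • F x := by
    rw [discreteGenerator_apply]
    module
  have h_norm := norm_add_le (r • x - discreteGenerator h F x) (h⁻¹ • F x)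
  have hFx : ‖F x‖ ≤ ‖x‖ := by simpa only [one_mul] using F.le_of_opNorm_le hF x
  rw [← h_split, norm_smul, norm_smul, Real.norm_of_nonneg (by positivity),
    Real.norm_of_nonneg (by positivity), add_mul] at h_norm
  have h_contract : h⁻¹ * ‖F x‖ ≤ h⁻¹ * ‖x‖ := by gcongr
  linarith

section Resolvent

variable {𝕜 X : Type*} [NontriviallyNormedField 𝕜] [NormedAddCommGroup X] [NormedSpace 𝕜 X]
  {L : X →L[𝕜] X} {r : 𝕜}

lemma resolvent_apply_smul_sub (hr : r ∈ resolventSet 𝕜 L) (x : X) :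
    resolvent L r (r • x - L x) = x :=
  DFunLike.congr_fun (Ring.inverse_mul_cancel _ hr) x

lemma apply_resolvent_apply (hr : r ∈ resolventSet 𝕜 L) (x : X) :
    L (resolvent L r x) = r • resolvent L r x - x := by
  have h_inv : r • resolvent L r x - L (resolvent L r x) = x :=
    DFunLike.congr_fun (Ring.mul_inverse_cancel _ hr) x
  rw [eq_sub_iff_add_eq', ← eq_sub_iff_add_eq, h_inv]

end Resolvent

variable [CompleteSpace E]

lemma mem_resolventSet_discreteGenerator {h r : ℝ} (hh : 0 < h) {F : E →L[ℝ] E}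
    (hF : ‖F‖ ≤ 1) (hr : 0 < r) : r ∈ resolventSet ℝ (discreteGenerator h F) := by
  have h_norm : ‖h⁻¹ • F‖ * ‖(1 : E →L[ℝ] E)‖ < ‖r + h⁻¹‖ := by
    rw [norm_smul, Real.norm_of_nonneg (by positivity), Real.norm_of_nonneg (by positivity)]
    calc h⁻¹ * ‖F‖ * ‖(1 : E →L[ℝ] E)‖ ≤ h⁻¹ * 1 * 1 := by
          gcongr
          exact ContinuousLinearMap.norm_id_le
      _ < r + h⁻¹ := by linarith
  have h_unit : IsUnit (algebraMap ℝ (E →L[ℝ] E) (r + h⁻¹) - h⁻¹ • F) :=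
    spectrum.mem_resolventSet_of_norm_lt_mul h_norm
  have h_eq : algebraMap ℝ (E →L[ℝ] E) r - discreteGenerator h F =
      algebraMap ℝ (E →L[ℝ] E) (r + h⁻¹) - h⁻¹ • F := by
    simp only [discreteGenerator, Algebra.algebraMap_eq_smul_one]
    module
  rwa [resolventSet, mem_ofPred_eq, h_eq]

lemma norm_resolvent_discreteGenerator_le {h r : ℝ} (hh : 0 < h) {F : E →L[ℝ] E}
    (hF : ‖F‖ ≤ 1) (hr : 0 < r) : ‖resolvent (discreteGenerator h F) r‖ ≤ r⁻¹ := by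
  refine ContinuousLinearMap.opNorm_le_bound _ (by positivity) fun x => ?_
  have h_le := mul_norm_le_norm_smul_sub_discreteGenerator hh hF hr.le
    (resolvent (discreteGenerator h F) r x)
  rw [apply_resolvent_apply (mem_resolventSet_discreteGenerator hh hF hr), sub_sub_cancel] at h_le
  rwa [inv_mul_eq_div, le_div_iff₀' hr]

/-- The resolvent `(1 - A)⁻¹` of the discrete generator `A = h⁻¹ (F - 1)`, meant for `0 < h` and
`‖F‖ ≤ 1`, when `1` lies in the resolvent set of `A`. -/
def discreteResolvent (h : ℝ) (F : E →L[ℝ] E) : E →L[ℝ] E :=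
  resolvent (discreteGenerator h F) (1 : ℝ)

section DiscreteResolvent

variable {h : ℝ} {F : E →L[ℝ] E}

lemma norm_discreteResolvent_le (hh : 0 < h) (hF : ‖F‖ ≤ 1) : ‖discreteResolvent h F‖ ≤ 1 := by
  simpa only [discreteResolvent, inv_one] using norm_resolvent_discreteGenerator_le hh hF one_pos

lemma norm_discreteResolvent_apply_le (hh : 0 < h) (hF : ‖F‖ ≤ 1) (x : E) :
    ‖discreteResolvent h F x‖ ≤ ‖x‖ := by
  simpa only [one_mul] using
    ContinuousLinearMap.le_of_opNorm_le _ (norm_discreteResolvent_le hh hF) x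

lemma discreteResolvent_apply_sub (hh : 0 < h) (hF : ‖F‖ ≤ 1) (x : E) :
    discreteResolvent h F (x - discreteGenerator h F x) = x := by
  simpa only [discreteResolvent, one_smul] using
    resolvent_apply_smul_sub (mem_resolventSet_discreteGenerator hh hF one_pos) x

lemma apply_discreteResolvent (hh : 0 < h) (hF : ‖F‖ ≤ 1) (x : E) :
    F (discreteResolvent h F x) =
      discreteResolvent h F x + h • (discreteResolvent h F x - x) := by
  rw [apply_eq_add_smul_discreteGenerator hh.ne', discreteResolvent,
    apply_resolvent_apply (mem_resolventSet_discreteGenerator hh hF one_pos), one_smul]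

-- For `y = A x` and `z = A y` the local error consists of two resolvent errors, both `o(1)` and
-- multiplied by `h`, and a Taylor remainder `o(h)`.
lemma apply_discreteResolvent_sub_discreteResolvent (hh : 0 < h) (hF : ‖F‖ ≤ 1) {S : ℝ → E →L[ℝ] E}
    (hS : IsC0Semigroup S) {s : ℝ} (hs : 0 ≤ s) (x y z : E) :
    F (discreteResolvent h F (S s (x - y))) - discreteResolvent h F (S (s + h) (x - y)) =
      h • ((discreteResolvent h F (S s (x - y)) - S s x) -
        (discreteResolvent h F (S s (y - z)) - S s y)) -
      discreteResolvent h F (S s (S h (x - y) - (x - y) - h • (y - z))) := by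
  rw [apply_discreteResolvent hh hF, hS.apply_add hs hh.le]
  simp only [map_sub, map_smul]
  module

end DiscreteResolvent

/-- A stable and consistent one-step approximation of the operator `(D, f)`: contractions `F a`
with step sizes `h a → 0⁺` whose discrete generators converge to `f` pointwise on `D`. -/
structure IsConsistentScheme (l : Filter α) (h : α → ℝ) (F : α → E →L[ℝ] E) (D : Set E)
    (f : E → E) : Prop where
  norm_le_one : ∀ a, ‖F a‖ ≤ 1
  step_pos : ∀ a, 0 < h a
  tendsto_step : Tendsto h l (𝓝 0)
  tendsto_discreteGenerator : ∀ x ∈ D,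
    Tendsto (fun a => discreteGenerator (h a) (F a) x) l (𝓝 (f x))

namespace IsConsistentScheme

variable {h : α → ℝ} {F : α → E →L[ℝ] E} {D : Set E} {f : E → E} {S : ℝ → E →L[ℝ] E}

lemma equicontinuous_discreteResolvent (hF : IsConsistentScheme l h F D f) :
    Equicontinuous fun a (p : E × E) => discreteResolvent (h a) (F a) (p.1 - p.2) :=
  equicontinuous_clm_of_norm_le
    (G := fun a => (discreteResolvent (h a) (F a)).comp
      (ContinuousLinearMap.fst ℝ E E - ContinuousLinearMap.snd ℝ E E)) fun a =>
    (ContinuousLinearMap.opNorm_comp_le _ _).trans <|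
      mul_le_of_le_one_left (norm_nonneg _)
        (norm_discreteResolvent_le (hF.step_pos a) (hF.norm_le_one a))

lemma tendsto_discreteResolvent_of_mem_closure (hF : IsConsistentScheme l h F D f) {p : E × E}
    (hp : p ∈ closure (opGraph D f)) :
    Tendsto (fun a => discreteResolvent (h a) (F a) (p.1 - p.2)) l (𝓝 p.1) := by
  refine (hF.equicontinuous_discreteResolvent p).tendsto_of_mem_closure
    (continuous_fst.continuousWithinAt) ?_ hp
  rintro ⟨x, _⟩ ⟨hx : x ∈ D, rfl : _ = f x⟩
  have h_defect : Tendsto (fun a => discreteGenerator (h a) (F a) x - f x) l (𝓝 0) :=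
    tendsto_sub_nhds_zero_iff.2 (hF.tendsto_discreteGenerator x hx)
  have h_image : Tendsto (fun a =>
      discreteResolvent (h a) (F a) (discreteGenerator (h a) (F a) x - f x)) l (𝓝 0) :=
    squeeze_zero_norm (fun a => norm_discreteResolvent_apply_le (hF.step_pos a)
      (hF.norm_le_one a) _) (tendsto_zero_iff_norm_tendsto_zero.1 h_defect)
  refine (by simpa only [add_zero] using h_image.const_add x : Tendsto _ l (𝓝 x)).congr fun a => ?_
  nth_rw 1 [← discreteResolvent_apply_sub (hF.step_pos a) (hF.norm_le_one a) x]
  rw [← map_add, sub_add_sub_cancel]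

lemma tendstoUniformlyOn_discreteResolvent (hF : IsConsistentScheme l h F D f)
    (hS : IsC0Semigroup S) (hcore : ∀ x y, GenLimitAt S x y → (x, y) ∈ closure (opGraph D f))
    {x y : E} (hxy : GenLimitAt S x y) (b : ℝ) :
    TendstoUniformlyOn (fun a s => discreteResolvent (h a) (F a) (S s (x - y)))
      (fun s => S s x) l (Icc 0 b) := by
  have h_orbit : ContinuousOn (fun s => (S s x, S s y)) (Icc 0 b) :=
    ((hS.strong_cont x).prodMk (hS.strong_cont y)).mono Icc_subset_Ici_self
  have h_closure : ∀ p ∈ (fun s => (S s x, S s y)) '' Icc 0 b, p ∈ closure (opGraph D f) :=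
    forall_mem_image.2 fun s hs => hcore _ _ (hS.genLimitAt_apply hxy hs.1)
  have h_unif := tendstoUniformlyOn_of_equicontinuous_of_isCompact
    hF.equicontinuous_discreteResolvent (isCompact_Icc.image_of_continuousOn h_orbit)
    fun p hp => hF.tendsto_discreteResolvent_of_mem_closure (h_closure p hp)
  simpa only [map_sub, Function.comp_def] using
    (h_unif.comp fun s => (S s x, S s y)).mono (subset_preimage_image _ _)

lemma eventually_norm_apply_discreteResolvent_sub_le (hF : IsConsistentScheme l h F D f)
    (hS : IsC0Semigroup S) (hcore : ∀ x y, GenLimitAt S x y → (x, y) ∈ closure (opGraph D f))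
    {x y z : E} (hxy : GenLimitAt S x y) (hyz : GenLimitAt S y z) (b : ℝ) {c : ℝ} (hc : 0 < c) :
    ∀ᶠ a in l, ∀ s ∈ Icc 0 b,
      ‖F a (discreteResolvent (h a) (F a) (S s (x - y))) -
        discreteResolvent (h a) (F a) (S (s + h a) (x - y))‖ ≤ h a * c := by
  obtain ⟨M, hM⟩ := exists_norm_le_of_forall_continuousOn isCompact_Icc
    fun v => (hS.strong_cont v).mono (Icc_subset_Ici_self : Icc 0 b ⊆ _)
  have hc3 : 0 < c / 3 := by positivity
  have h_taylor := ((tendsto_nhdsWithin_iff.2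
    ⟨hF.tendsto_step, Eventually.of_forall hF.step_pos⟩).eventually
    ((hxy.sub hyz).eventually_norm_sub_sub_smul_le (c := c / 3 / (|M| + 1)) (by positivity)))
  filter_upwards [h_taylor,
    Metric.tendstoUniformlyOn_iff.1 (hF.tendstoUniformlyOn_discreteResolvent hS hcore hxy b) _ hc3,
    Metric.tendstoUniformlyOn_iff.1 (hF.tendstoUniformlyOn_discreteResolvent hS hcore hyz b) _ hc3]
    with a ha_taylor hax hay s hs
  have hh := hF.step_pos a
  have h_remainder : ‖S s (S (h a) (x - y) - (x - y) - h a • (y - z))‖ ≤ h a * (c / 3) :=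
    calc _ ≤ (|M| + 1) * (h a * (c / 3 / (|M| + 1))) :=
          (S s).le_of_opNorm_le_of_le
            ((hM s hs).trans ((le_abs_self M).trans (lt_add_one _).le)) ha_taylor
      _ = h a * (c / 3) := by field_simp
  have hax' := hax s hs
  have hay' := hay s hs
  rw [dist_comm, dist_eq_norm] at hax' hay'
  rw [apply_discreteResolvent_sub_discreteResolvent hh (hF.norm_le_one a) hS hs.1 x y z]
  calc _ ≤ ‖h a • ((discreteResolvent (h a) (F a) (S s (x - y)) - S s x) -
            (discreteResolvent (h a) (F a) (S s (y - z)) - S s y))‖ +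
          ‖discreteResolvent (h a) (F a)
            (S s (S (h a) (x - y) - (x - y) - h a • (y - z)))‖ := norm_sub_le _ _
    _ ≤ h a * (c / 3 + c / 3) + h a * (c / 3) := by
        rw [norm_smul, Real.norm_of_nonneg hh.le]
        gcongr
        · exact (norm_sub_le _ _).trans (add_le_add hax'.le hay'.le)
        · exact (norm_discreteResolvent_apply_le hh (hF.norm_le_one a) _).trans h_remainder
    _ = h a * c := by ring

lemma tendsto_pow_apply_discreteResolvent_sub (hF : IsConsistentScheme l h F D f)
    (hS : IsC0Semigroup S) (hcore : ∀ x y, GenLimitAt S x y → (x, y) ∈ closure (opGraph D f))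
    {x y z : E} (hxy : GenLimitAt S x y) (hyz : GenLimitAt S y z) {k : α → ℕ} {b : ℝ}
    (hk : ∀ᶠ a in l, k a * h a ≤ b) :
    Tendsto (fun a => (F a ^ k a) (discreteResolvent (h a) (F a) (x - y)) -
      discreteResolvent (h a) (F a) (S (k a * h a) (x - y))) l (𝓝 0) := by
  refine Metric.tendsto_nhds.2 fun e he => ?_
  filter_upwards [hk, hF.eventually_norm_apply_discreteResolvent_sub_le hS hcore hxy hyz b
    (c := e / (|b| + 1)) (by positivity)] with a hka ha
  have hh := hF.step_pos a
  have h_le := norm_pow_apply_sub_le (hF.norm_le_one a) (k := k a) (c := h a * (e / (|b| + 1)))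
    (u := fun j => discreteResolvent (h a) (F a) (S (j * h a) (x - y))) fun j hj => by
      have hjk : (j : ℝ) * h a ≤ k a * h a := by gcongr
      simpa only [Nat.cast_succ, add_one_mul] using
        ha (j * h a) ⟨by positivity, hjk.trans hka⟩
  simp only [Nat.cast_zero, zero_mul, hS.map_zero, one_apply_eq_self] at h_le
  rw [dist_zero_right]
  calc _ ≤ k a * (h a * (e / (|b| + 1))) := h_le
    _ = k a * h a / (|b| + 1) * e := by ring
    _ < 1 * e := by
        gcongr
        rw [div_lt_one (by positivity)]
        linarith [le_abs_self b]
    _ = e := one_mul e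

theorem tendsto_pow_apply (hF : IsConsistentScheme l h F D f)
    (hS : IsC0Semigroup S) (hcore : ∀ x y, GenLimitAt S x y → (x, y) ∈ closure (opGraph D f))
    {k : α → ℕ} {τ : ℝ} (hk : Tendsto (fun a => k a * h a) l (𝓝 τ)) (x : E) :
    Tendsto (fun a => (F a ^ k a) x) l (𝓝 (S τ x)) := by
  rcases l.eq_or_neBot with rfl | _
  · exact tendsto_bot
  refine tendsto_clm_apply_of_dense
    (fun a => norm_pow_le_one_of_norm_le_one (hF.norm_le_one a) (k a)) (S τ)
    hS.dense_generator_sq_domain ?_ x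
  rintro x ⟨y, z, hxy, hyz⟩
  have h_time_nonneg : ∀ a, 0 ≤ k a * h a := fun a =>
    mul_nonneg (Nat.cast_nonneg _) (hF.step_pos a).le
  have h_time_le : ∀ᶠ a in l, k a * h a ≤ τ + 1 := hk.eventually_le_const (lt_add_one τ)
  have h_start : Tendsto (fun a => (F a ^ k a) (x - discreteResolvent (h a) (F a) (x - y))) l
      (𝓝 0) := by
    refine tendsto_clm_apply_of_norm_le (x₀ := 0) (Eventually.of_forall fun a =>
      norm_pow_le_one_of_norm_le_one (hF.norm_le_one a) (k a)) ?_ ?_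
    · simpa only [map_zero] using tendsto_const_nhds
    · simpa only [sub_self] using
        (hF.tendsto_discreteResolvent_of_mem_closure (hcore x y hxy)).const_sub x
  have h_end : Tendsto (fun a => discreteResolvent (h a) (F a) (S (k a * h a) (x - y)) -
      S (k a * h a) x) l (𝓝 0) := by
    refine Metric.tendsto_nhds.2 fun e he => ?_
    filter_upwards [h_time_le, Metric.tendstoUniformlyOn_iff.1
      (hF.tendstoUniformlyOn_discreteResolvent hS hcore hxy (τ + 1)) e he] with a hka ha
    rw [dist_zero_right, ← dist_eq_norm, dist_comm]
    exact ha _ ⟨h_time_nonneg a, hka⟩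
  have h_orbit : Tendsto (fun a => S (k a * h a) x) l (𝓝 (S τ x)) :=
    ((hS.strong_cont x) τ (ge_of_tendsto' hk h_time_nonneg)).tendsto.comp
      (tendsto_nhdsWithin_iff.2 ⟨hk, Eventually.of_forall h_time_nonneg⟩)
  have h_middle := hF.tendsto_pow_apply_discreteResolvent_sub hS hcore hxy hyz h_time_le
  have h_sum := ((h_start.add h_middle).add h_end).add h_orbit
  simp only [zero_add] at h_sum
  refine h_sum.congr fun a => ?_
  rw [map_sub]
  abel

end IsConsistentScheme

end Chernoff

section Evolution

variable {T : ℝ}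

lemma IsEvolutionSystem.continuousOn_apply {R : ℝ → ℝ → E →L[ℝ] E} [CompleteSpace E]
    (hR : IsEvolutionSystem T R) {g : ℝ → E} (hg : ContinuousOn g (Icc 0 T)) :
    ContinuousOn (fun s => R T s (g s)) (Icc 0 T) :=
  continuousOn_clm_apply_of_forall_continuousOn isCompact_Icc
    (fun x => (hR.strong_cont x).comp (f := fun s : ℝ => (T, s)) (by fun_prop)
      fun _ hs => ⟨hs.1, hs.2, le_rfl⟩) hg

namespace IsDeterminedEvolSystem

variable {ι : V →L[ℝ] E}

section Single

variable {B : ℝ → V →L[ℝ] E} {R : ℝ → ℝ → E →L[ℝ] E}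

lemma norm_le_one (hR : IsDeterminedEvolSystem ι T B 1 0 R) {s : ℝ} (hs : s ∈ Icc 0 T) :
    ‖R T s‖ ≤ 1 := by
  simpa only [zero_mul, Real.exp_zero, mul_one] using hR.2.1 s T hs.1 hs.2 le_rfl

lemma apply_sub_self_eq_integral [CompleteSpace E] {M ω : ℝ}
    (hR : IsDeterminedEvolSystem ι T B M ω R)
    (hB : ∀ v, ContinuousOn (fun s => B s v) (Icc 0 T)) (v : V) {s : ℝ} (hs : s ∈ Icc 0 T) :
    R T s (ι v) - ι v = ∫ r in s..T, R T r (B r v) := by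
  have h_sub : Icc s T ⊆ Icc 0 T := Icc_subset_Icc_left hs.1
  have h_deriv : ∀ r ∈ Icc s T, HasDerivWithinAt (fun r => R T r (ι v)) (-R T r (B r v))
      (Icc 0 T) r := fun r hr => hR.2.2.2 v r T (h_sub hr).1 hr.2 le_rfl
  have h_ftc := intervalIntegral.integral_eq_sub_of_hasDerivAt_of_le hs.2
    (fun r hr => ((h_deriv r hr).mono h_sub).continuousWithinAt)
    (fun r hr => (h_deriv r (Ioo_subset_Icc_self hr)).hasDerivAt
      (Icc_mem_nhds (hs.1.trans_lt hr.1) hr.2))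
    (((hR.1.continuousOn_apply (hB v)).mono h_sub).neg.intervalIntegrable_of_Icc hs.2)
  rw [intervalIntegral.integral_neg, hR.1.refl T ⟨hs.1.trans hs.2, le_rfl⟩,
    one_apply_eq_self] at h_ftc
  rw [← neg_sub, ← h_ftc, neg_neg]

end Single

section Family

variable {α : Type*} {l : Filter α} {B : α → ℝ → V →L[ℝ] E} {lam : α → ℝ}
  {R : α → ℝ → ℝ → E →L[ℝ] E}

lemma tendsto_apply_self [CompleteSpace E]
    (hR : ∀ a, IsDeterminedEvolSystem ι T (fun s => lam a • B a s) 1 0 (R a))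
    (hι : DenseRange ι) (hB : ∀ a v, ContinuousOn (fun s => B a s v) (Icc 0 T))
    (hB_bdd : ∀ v, ∃ C, ∀ᶠ a in l, ∀ s ∈ Icc 0 T, ‖B a s v‖ ≤ C) (hlam : Tendsto lam l (𝓝 0))
    {s : ℝ} (hs : s ∈ Icc 0 T) (x : E) : Tendsto (fun a => R a T s x) l (𝓝 x) := by
  refine tendsto_clm_apply_of_dense (fun a => (hR a).norm_le_one hs) (1 : E →L[ℝ] E) hι ?_ x
  rintro _ ⟨v, rfl⟩
  obtain ⟨C, hC⟩ := hB_bdd v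
  have h_zero : Tendsto (fun a => |lam a| * C * |T - s|) l (𝓝 0) := by
    simpa only [abs_zero, zero_mul] using (hlam.abs.mul_const C).mul_const |T - s|
  refine tendsto_iff_norm_sub_tendsto_zero.2 (squeeze_zero_norm' (hC.mono fun a ha => ?_) h_zero)
  rw [norm_norm, one_apply_eq_self,
    (hR a).apply_sub_self_eq_integral (fun w => (hB a w).const_smul (lam a)) v hs]
  refine intervalIntegral.norm_integral_le_of_norm_le_const fun r hr => ?_
  rw [uIoc_of_le hs.2] at hr
  have hr' : r ∈ Icc 0 T := ⟨hs.1.trans hr.1.le, hr.2⟩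
  refine ((R a T r).le_of_opNorm_le ((hR a).norm_le_one hr') _).trans ?_
  rw [one_mul, smul_apply, norm_smul, Real.norm_eq_abs]
  gcongr
  exact ha r hr'

lemma tendsto_integral_apply [CompleteSpace E] [l.IsCountablyGenerated] (hT : 0 ≤ T)
    (hR : ∀ a, IsDeterminedEvolSystem ι T (fun s => lam a • B a s) 1 0 (R a))
    (hι : DenseRange ι) (hB : ∀ a v, ContinuousOn (fun s => B a s v) (Icc 0 T))
    (hB_bdd : ∀ v, ∃ C, ∀ᶠ a in l, ∀ s ∈ Icc 0 T, ‖B a s v‖ ≤ C) (hlam : Tendsto lam l (𝓝 0))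
    {v : V} {B₀ : ℝ → E} (hB_lim : ∀ s ∈ Icc 0 T, Tendsto (fun a => B a s v) l (𝓝 (B₀ s))) :
    Tendsto (fun a => ∫ s in (0 : ℝ)..T, R a T s (B a s v)) l (𝓝 (∫ s in (0 : ℝ)..T, B₀ s)) := by
  obtain ⟨C, hC⟩ := hB_bdd v
  have h_mem : ∀ s ∈ uIoc 0 T, s ∈ Icc 0 T := fun s hs =>
    Ioc_subset_Icc_self (by rwa [uIoc_of_le hT] at hs)
  refine intervalIntegral.tendsto_integral_filter_of_dominated_convergence (fun _ => C)
    (Eventually.of_forall fun a => ?_) (hC.mono fun a ha => ae_of_all _ fun s hs => ?_)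
    intervalIntegrable_const (ae_of_all _ fun s hs => ?_)
  · exact (((hR a).1.continuousOn_apply (hB a v)).mono h_mem).aestronglyMeasurable
      measurableSet_uIoc
  · simpa only [one_mul] using (R a T s).le_of_opNorm_le_of_le
      ((hR a).norm_le_one (h_mem s hs)) (ha s (h_mem s hs))
  · exact tendsto_clm_apply_of_norm_le
      (Eventually.of_forall fun a => (hR a).norm_le_one (h_mem s hs))
      (tendsto_apply_self hR hι hB hB_bdd hlam (h_mem s hs) (B₀ s)) (hB_lim s (h_mem s hs))

theorem isConsistentScheme [CompleteSpace E] [l.IsCountablyGenerated] (hT : 0 < T)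
    (hR : ∀ a, IsDeterminedEvolSystem ι T (fun s => lam a • B a s) 1 0 (R a))
    (hι : DenseRange ι) (hB : ∀ a v, ContinuousOn (fun s => B a s v) (Icc 0 T))
    (hB_bdd : ∀ v, ∃ C, ∀ᶠ a in l, ∀ s ∈ Icc 0 T, ‖B a s v‖ ≤ C)
    (hlam_pos : ∀ a, 0 < lam a) (hlam : Tendsto lam l (𝓝 0)) {B₀ : ℝ → V → E}
    (hB_lim : ∀ v, ∀ s ∈ Icc 0 T, Tendsto (fun a => B a s v) l (𝓝 (B₀ s v))) {f : E → E}
    (hf : ∀ v, f (ι v) = (1 / T) • ∫ s in (0 : ℝ)..T, B₀ s v) :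
    IsConsistentScheme l (fun a => lam a * T) (fun a => R a T 0) (range ι) f where
  norm_le_one a := (hR a).norm_le_one ⟨le_rfl, hT.le⟩
  step_pos a := mul_pos (hlam_pos a) hT
  tendsto_step := by simpa only [zero_mul] using hlam.mul_const T
  tendsto_discreteGenerator := by
    rintro _ ⟨v, rfl⟩
    rw [hf v]
    refine ((tendsto_integral_apply hT.le hR hι hB hB_bdd hlam (hB_lim v)).const_smul
      (1 / T)).congr fun a => ?_
    rw [discreteGenerator_apply, (hR a).apply_sub_self_eq_integral
      (fun w => (hB a w).const_smul (lam a)) v ⟨le_rfl, hT.le⟩]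
    simp only [smul_apply, map_smul, intervalIntegral.integral_smul, smul_smul]
    congr 1
    field_simp [(hlam_pos a).ne']

end Family

end IsDeterminedEvolSystem

end Evolution

section TimeAverage

variable {ι : V →L[ℝ] E} {T : ℝ}

lemma continuousOn_one_sub_smul_sub_smul_apply {B : ℝ → V →L[ℝ] E} {v : V}
    (hB : ContinuousOn (fun s => B s v) (Icc 0 T)) :
    ContinuousOn (fun p : ℝ × ℝ => ((1 - p.1) • B p.2 - p.1 • ι) v) (univ ×ˢ Icc 0 T) := by
  have hB' : ContinuousOn (fun p : ℝ × ℝ => B p.2 v) (univ ×ˢ Icc 0 T) :=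
    hB.comp continuousOn_snd fun _ hp => hp.2
  exact ((continuousOn_const.sub continuousOn_fst).smul hB').sub
    (continuousOn_fst.smul continuousOn_const)

lemma one_sub_smul_timeAvg_sub_smul_apply [CompleteSpace E] (hT : 0 < T) {A : HypData E V}
    (hA : ContinuousOn A.bdd (Icc 0 T)) (μ : ℝ) (v : V) :
    (1 - μ) • timeAvg T A v - μ • ι v =
      (1 / T) • ∫ τ in (0 : ℝ)..T, ((1 - μ) • A.bdd τ - μ • ι) v := by
  have hA_int : IntervalIntegrable A.bdd volume 0 T := hA.intervalIntegrable_of_Icc hT.le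
  have hAv_int : IntervalIntegrable (fun τ => (1 - μ) • A.bdd τ v) volume 0 T :=
    ((hA.clm_apply continuousOn_const).intervalIntegrable_of_Icc hT.le).smul _
  simp only [sub_apply, smul_apply]
  rw [intervalIntegral.integral_sub hAv_int intervalIntegrable_const,
    intervalIntegral.integral_smul, intervalIntegral.integral_const, timeAvg, smul_apply,
    ContinuousLinearMap.intervalIntegral_apply hA_int]
  match_scalars <;> field_simp; ring

end TimeAverage

lemma tendsto_zero_of_tendsto_natCast_mul {α : Type*} {l : Filter α} {k : α → ℕ} {u : α → ℝ}
    {c : ℝ} (hk : Tendsto k l atTop) (hku : Tendsto (fun a => (k a : ℝ) * u a) l (𝓝 c)) :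
    Tendsto u l (𝓝 0) := by
  refine (hku.div_atTop (tendsto_natCast_atTop_atTop.comp hk)).congr' ?_
  filter_upwards [hk.eventually_ne_atTop 0] with a ha
  exact mul_div_cancel_left₀ (u a) (Nat.cast_ne_zero.2 ha)

theorem statement_11_general
    {E : Type*} [NormedAddCommGroup E] [NormedSpace ℝ E] [CompleteSpace E]
    {V : Type*} [NormedAddCommGroup V] [NormedSpace ℝ V]
    {ι : V →L[ℝ] E} (hι : DenseRange ι) {T : ℝ} (hT : 0 < T)
    {B : ℝ → V →L[ℝ] E} (hB : ∀ v, ContinuousOn (fun s => B s v) (Icc 0 T))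
    {α : Type*} {l : Filter α} [l.IsCountablyGenerated] {lam mu : α → ℝ}
    {R : α → ℝ → ℝ → E →L[ℝ] E}
    (hR : ∀ a, IsDeterminedEvolSystem ι T
      (fun s => lam a • ((1 - mu a) • B s - mu a • ι)) 1 0 (R a))
    {mu0 : ℝ} {f : E → E}
    (hf : ∀ v, f (ι v) = (1 / T) • ∫ τ in (0 : ℝ)..T, ((1 - mu0) • B τ - mu0 • ι) v)
    {D' : Set E} {A' : E → E} {S : ℝ → E →L[ℝ] E} (hclos : IsClosureOf D' A' (range ι) f)
    (hS : IsC0Semigroup S) (hgenS : IsGeneratorOf D' A' S)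
    (hlam_pos : ∀ a, 0 < lam a) (hlam : Tendsto lam l (𝓝 0)) (hmu : Tendsto mu l (𝓝 mu0))
    {k : α → ℕ} {ε : ℝ} (hk : Tendsto (fun a => (k a : ℝ) * lam a) l (𝓝 ε)) (x : E) :
    Tendsto (fun a => (R a T 0 ^ k a) x) l (𝓝 (S (ε * T) x)) := by
  have h_cont (v : V) := continuousOn_one_sub_smul_sub_smul_apply (ι := ι) (hB v)
  have h_cont_time : ∀ a v, ContinuousOn (fun s => ((1 - mu a) • B s - mu a • ι) v) (Icc 0 T) :=
    fun a v => (h_cont v).comp (f := fun s => (mu a, s)) (by fun_prop) fun _ hs => ⟨mem_univ _, hs⟩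
  have h_bdd : ∀ v, ∃ C, ∀ᶠ a in l, ∀ s ∈ Icc 0 T, ‖((1 - mu a) • B s - mu a • ι) v‖ ≤ C := by
    intro v
    obtain ⟨C, hC⟩ := ((isCompact_closedBall mu0 1).prod isCompact_Icc).exists_bound_of_continuousOn
      ((h_cont v).mono (prod_mono_left (subset_univ _)))
    exact ⟨C, (hmu.eventually (Metric.closedBall_mem_nhds mu0 one_pos)).mono
      fun a ha s hs => hC (mu a, s) ⟨ha, hs⟩⟩
  have h_lim : ∀ v, ∀ s ∈ Icc 0 T, Tendsto (fun a => ((1 - mu a) • B s - mu a • ι) v) l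
      (𝓝 (((1 - mu0) • B s - mu0 • ι) v)) := fun v s _ =>
    (((hmu.const_sub 1).smul_const (B s v)).sub (hmu.smul_const (ι v)))
  have h_scheme := IsDeterminedEvolSystem.isConsistentScheme hT hR hι h_cont_time h_bdd hlam_pos
    hlam h_lim hf
  refine h_scheme.tendsto_pow_apply hS (fun _ _ => hclos.mem_closure_opGraph hgenS) ?_ x
  simpa only [mul_assoc] using hk.mul_const T

/-- Lemma 5(ii): with `A^{(μ)}(t) := −μI + (1−μ)A(t)` and `R^{(μ,λ)}` the
evolution system of `{λA^{(μ)}(t)}`, if `kₙ → ∞`, `kₙλₙ → ε > 0` and `μₙ → μ₀`, then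
`R^{(μₙ,λₙ)}(T,0)^{kₙ} x → S_{cl(A₀^{(μ₀)})}(εT) x` for every `x ∈ E`, where `cl(A₀^{(μ₀)})`
is the closure of `(1/T)∫₀ᵀ A^{(μ₀)}(τ)dτ` (with domain `ι(V)`). -/
theorem statement_11
    {E : Type*} [NormedAddCommGroup E] [NormedSpace ℝ E] [CompleteSpace E]
    [TopologicalSpace.SeparableSpace E]
    {V : Type*} [NormedAddCommGroup V] [NormedSpace ℝ V] [CompleteSpace V]
    (ι : V →L[ℝ] E) (hιinj : Function.Injective ι) (hιdense : DenseRange ι)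
    (T : ℝ) (hT : 0 < T)
    (A : HypData E V) (ω MV ωV : ℝ)
    (hgen : HypGen T A)
    (h1 : Hyp1' T A ω)
    (h2 : Hyp2 ι T A MV ωV)
    (h3 : Hyp3 ι T A)
    (h4 : Hyp4 ι T A ω)
    -- `RR mu lam` is the evolution system determined by `{λ A^{(μ)}(t)}`
    (RR : ℝ → ℝ → ℝ → ℝ → E →L[ℝ] E)
    (hRR : ∀ mu ∈ Icc (0 : ℝ) 1, ∀ lam > (0 : ℝ),
      IsDeterminedEvolSystem ι T
        (fun s => lam • ((1 - mu) • A.bdd s - mu • ι)) 1 0 (RR mu lam))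
    (mu0 : ℝ) (hmu0 : mu0 ∈ Icc (0 : ℝ) 1)
    -- `f` represents `A₀^{(μ₀)} = (1/T)∫₀ᵀ A^{(μ₀)}(τ)dτ` with domain `ι(V)`,
    -- `(D',A')` is its closure and `S` the C₀ semigroup generated by the closure
    (f : E → E)
    (hf : ∀ v : V, f (ι v) = (1 - mu0) • timeAvg T A v - mu0 • ι v)
    (D' : Set E) (A' : E → E) (S : ℝ → E →L[ℝ] E)
    (hclos : IsClosureOf D' A' (Set.range ι) f)
    (hS : IsC0Semigroup S) (hgenS : IsGeneratorOf D' A' S)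
    -- the sequences
    (kn : ℕ → ℕ) (lamn mun : ℕ → ℝ) (ε : ℝ) (hε : 0 < ε)
    (hlampos : ∀ n, 0 < lamn n) (hmun : ∀ n, mun n ∈ Icc (0 : ℝ) 1)
    (hkn : Tendsto kn atTop atTop)
    (hknlam : Tendsto (fun n => (kn n : ℝ) * lamn n) atTop (𝓝 ε))
    (hmu : Tendsto mun atTop (𝓝 mu0)) :
    ∀ x : E, Tendsto (fun n => (RR (mun n) (lamn n) T 0 ^ kn n) x) atTop
      (𝓝 (S (ε * T) x)) := by
  intro x
  exact statement_11_general hιdense hT (fun v => h3.2.clm_apply continuousOn_const)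
    (fun n => hRR (mun n) (hmun n) (lamn n) (hlampos n))
    (fun v => (hf v).trans (one_sub_smul_timeAvg_sub_smul_apply hT h3.2 mu0 v)) hclos hS hgenS
    hlampos (tendsto_zero_of_tendsto_natCast_mul hkn hknlam) hmu hknlam x
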